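/- Suppose ũ(T_t) is F_t-measurable and I_X = ∫_t^{t+Δ} e^{−κ_X(t+Δ−v)} dW_v, I_T = ∫_t^{t+Δ} e^{−κ_T(t+Δ−v)} dW_v are independent of F_t (W a Brownian motion with respect to a filtration containing F_t), λ, σ_T ∈ ℝ. Then E[ e^{λσ_T I_X} · 1_{I_T ≤ ũ(T_t)} | F_t ] = e^{λ²σ_T² k_X²/2} · Φ( ũ(T_t)/k_T − λσ_T k_{XT}²/k_T ), where k_X² = (1−e^{−2κ_XΔ})/(2κ_X), k_T² = (1−e^{−2κ_TΔ})/(2κ_T), k_{XT}² = (1−e^{−(κ_X+κ_T)Δ})/(κ_X+κ_T). -/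

import Mathlib

open MeasureTheory ProbabilityTheory Real

/-- The standard normal cumulative distribution function `Φ`. -/
noncomputable def stdNormalCDF (x : ℝ) : ℝ :=
  ((gaussianReal 0 1) (Set.Iic x)).toReal

/-!
Let `(X, T)` be a Gaussian pair. Tilting `μ` by the density proportional to `exp (a * X)` only
translates the law of `T`, by `a * cov[X, T; μ]` (Cameron–Martin), as comparing moment generating
functions shows. So `E[exp (a * X) 1_{T ≤ u}]` is the normalizing constant `E[exp (a * X)]` times
the Gaussian distribution function of the translated law at `u`. Independence of `(X, T)` from
the conditioning σ-algebra allows the constant `u` to be replaced by a variable `U` that is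
measurable with respect to it.
-/

section Freezing

variable {Ω β E G : Type*} {m mΩ : MeasurableSpace Ω} {mβ : MeasurableSpace β}
  [MeasurableSpace E] [StandardBorelSpace E] [NormedAddCommGroup G] [NormedSpace ℝ G]
  [CompleteSpace G] {μ : Measure Ω} [IsProbabilityMeasure μ] {Y : Ω → β} {Z : Ω → E} {f : β × E → G}

lemma condDistrib_ae_eq_const_of_indepFun [Nonempty E] (hY : AEMeasurable Y μ)
    (hZ : AEMeasurable Z μ) (hYZ : IndepFun Y Z μ) :
    condDistrib Z Y μ =ᵐ[μ.map Y] Kernel.const β (μ.map Z) := by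
  have : IsProbabilityMeasure (μ.map Z) := Measure.isProbabilityMeasure_map hZ
  refine condDistrib_ae_eq_of_measure_eq_compProd Y hZ ?_
  rw [Measure.compProd_const]
  exact (indepFun_iff_map_prod_eq_prod_map_map hY hZ).1 hYZ

lemma condExp_comap_ae_eq_integral_map_of_indepFun (hY : Measurable Y) (hZ : AEMeasurable Z μ)
    (hYZ : IndepFun Y Z μ) (hf : StronglyMeasurable f)
    (hf_int : Integrable (fun ω => f (Y ω, Z ω)) μ) :
    μ[fun ω => f (Y ω, Z ω) | mβ.comap Y] =ᵐ[μ] fun ω => ∫ z, f (Y ω, z) ∂(μ.map Z) := by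
  have : Nonempty E := (nonempty_of_isProbabilityMeasure μ).map Z
  filter_upwards [condExp_prod_ae_eq_integral_condDistrib hY hZ hf hf_int,
    ae_of_ae_map hY.aemeasurable (condDistrib_ae_eq_const_of_indepFun hY.aemeasurable hZ hYZ)]
    with ω hcond hconst
  rw [hcond, hconst, Kernel.const_apply]

lemma condExp_ae_eq_integral_map_of_indep (hm : m ≤ mΩ) (hY : Measurable[m] Y)
    (hZ : AEMeasurable Z μ) (hindep : Indep (MeasurableSpace.comap Z inferInstance) m μ)
    (hf : StronglyMeasurable f) (hf_int : Integrable (fun ω => f (Y ω, Z ω)) μ) :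
    μ[fun ω => f (Y ω, Z ω) | m] =ᵐ[μ] fun ω => ∫ z, f (Y ω, z) ∂(μ.map Z) := by
  -- `m` is the σ-algebra generated by the identity map from `(Ω, mΩ)` to `(Ω, m)`.
  have hid_indep : @IndepFun _ _ _ mΩ m _ id Z μ := by
    rw [IndepFun_iff_Indep (mβ := m), MeasurableSpace.comap_id]
    exact hindep.symm
  have hg : StronglyMeasurable[m.prod inferInstance] fun p : Ω × E => f (Y p.1, p.2) :=
    hf.comp_measurable ((hY.comp measurable_fst).prodMk measurable_snd)
  have hcond := condExp_comap_ae_eq_integral_map_of_indepFun (mβ := m) (measurable_id'' hm) hZ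
    hid_indep hg hf_int
  rwa [MeasurableSpace.comap_id] at hcond

end Freezing

section RealGaussian

variable {Ω : Type*} {mΩ : MeasurableSpace Ω} {μ : Measure Ω} {X : Ω → ℝ} {m : ℝ} {v : NNReal}

lemma gaussianReal_real_Iic (hv : v ≠ 0) (u : ℝ) :
    (gaussianReal m v).real (Set.Iic u) = stdNormalCDF ((u - m) / √v) := by
  have hsqrt : 0 < √(v : ℝ) := Real.sqrt_pos.2 (by exact_mod_cast pos_iff_ne_zero.2 hv)
  have hlaw : HasLaw (fun x => (x - m) / √v) (gaussianReal 0 1) (gaussianReal m v) := by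
    convert! gaussianReal_div_const (gaussianReal_sub_const HasLaw.id m) (√v) using 2
    · simp
    · ext
      simp [hv]
  rw [stdNormalCDF, ← hlaw.map_eq, Measure.map_apply (by fun_prop) measurableSet_Iic,
    measureReal_def]
  congr 2
  ext x
  simp [div_le_div_iff_of_pos_right hsqrt]

lemma map_eq_gaussianReal_of_mgf_eq [IsProbabilityMeasure μ] (hX : AEMeasurable X μ)
    (h : mgf X μ = fun t => exp (m * t + v * t ^ 2 / 2)) : μ.map X = gaussianReal m v := by
  have hmgf : mgf X μ = mgf id (gaussianReal m v) := by rw [h, mgf_id_gaussianReal]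
  have hset : integrableExpSet X μ = Set.univ := by
    refine Set.eq_univ_of_forall fun t => mgf_pos_iff.1 ?_
    rw [h]
    positivity
  rw [← Measure.map_id (μ := gaussianReal m v)]
  refine Measure.ext_of_complexMGF_eq hX aemeasurable_id (funext fun z => ?_)
  exact eqOn_complexMGF_of_mgf hmgf (by simp [hset])

lemma integrable_exp_mul_of_hasGaussianLaw (hX : HasGaussianLaw X μ) (a : ℝ) :
    Integrable (fun ω => exp (a * X ω)) μ := by
  refine Integrable.comp_aemeasurable (f := X) (g := fun x => exp (a * x)) ?_ hX.aemeasurable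
  rw [hX.map_eq_gaussianReal]
  exact integrable_exp_mul_gaussianReal a

end RealGaussian

lemma variance_const_mul_add_const_mul {Ω : Type*} {mΩ : MeasurableSpace Ω} {μ : Measure Ω}
    [IsFiniteMeasure μ] {X T : Ω → ℝ} (hX : MemLp X 2 μ) (hT : MemLp T 2 μ) (c d : ℝ) :
    Var[fun ω => c * X ω + d * T ω; μ]
      = c ^ 2 * Var[X; μ] + 2 * c * d * cov[X, T; μ] + d ^ 2 * Var[T; μ] := by
  rw [variance_fun_add (hX.const_mul c) (hT.const_mul d), variance_const_mul, variance_const_mul,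
    covariance_const_mul_left, covariance_const_mul_right]
  ring

section GaussianPair

variable {Ω : Type*} {mΩ : MeasurableSpace Ω} {μ : Measure Ω} {X T : Ω → ℝ}

lemma hasGaussianLaw_linearCombination (hXT : HasGaussianLaw (fun ω => (X ω, T ω)) μ) (c d : ℝ) :
    HasGaussianLaw (fun ω => c * X ω + d * T ω) μ :=
  hXT.map_fun (c • ContinuousLinearMap.fst ℝ ℝ ℝ + d • ContinuousLinearMap.snd ℝ ℝ ℝ)

lemma hasGaussianLaw_prodMk_of_linearCombination
    (h : ∀ c d : ℝ, HasGaussianLaw (fun ω => c * X ω + d * T ω) μ) :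
    HasGaussianLaw (fun ω => (X ω, T ω)) μ := by
  have hX : AEMeasurable X μ := by simpa using (h 1 0).aemeasurable
  have hT : AEMeasurable T μ := by simpa using (h 0 1).aemeasurable
  refine ⟨isGaussian_of_isGaussian_map fun L => ?_⟩
  have hL (ω : Ω) : L (X ω, T ω) = L (1, 0) * X ω + L (0, 1) * T ω := by
    rw [show (X ω, T ω) = X ω • ((1, 0) : ℝ × ℝ) + T ω • ((0, 1) : ℝ × ℝ) by simp, map_add,
      map_smul, map_smul, smul_eq_mul, smul_eq_mul, mul_comm (X ω), mul_comm (T ω)]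
  rw [AEMeasurable.map_map_of_aemeasurable (by fun_prop) (by fun_prop)]
  simpa only [Function.comp_def, hL] using (h (L (1, 0)) (L (0, 1))).isGaussian_map

lemma integral_exp_linearCombination (hXT : HasGaussianLaw (fun ω => (X ω, T ω)) μ) (c d : ℝ) :
    ∫ ω, exp (c * X ω + d * T ω) ∂μ
      = exp (c * μ[X] + d * μ[T]
          + (c ^ 2 * Var[X; μ] + 2 * c * d * cov[X, T; μ] + d ^ 2 * Var[T; μ]) / 2) := by
  have := hXT.isProbabilityMeasure
  have hmgf := mgf_gaussianReal (hasGaussianLaw_linearCombination hXT c d).map_eq_gaussianReal 1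
  rw [integral_add (hXT.fst.integrable.const_mul c) (hXT.snd.integrable.const_mul d),
    integral_const_mul, integral_const_mul, Real.coe_toNNReal _ (variance_nonneg _ _),
    variance_const_mul_add_const_mul hXT.fst.memLp_two hXT.snd.memLp_two] at hmgf
  simpa only [mgf, one_mul, mul_one, one_pow] using hmgf

lemma map_tilted_mul_eq_gaussianReal (hXT : HasGaussianLaw (fun ω => (X ω, T ω)) μ) (a : ℝ) :
    (μ.tilted (a * X ·)).map T
      = gaussianReal (μ[T] + a * cov[X, T; μ]) Var[T; μ].toNNReal := by
  have := hXT.isProbabilityMeasure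
  have := isProbabilityMeasure_tilted (integrable_exp_mul_of_hasGaussianLaw hXT.fst a)
  have hT : AEMeasurable T (μ.tilted (a * X ·)) :=
    hXT.snd.aemeasurable.mono_ac (tilted_absolutelyContinuous _ _)
  refine map_eq_gaussianReal_of_mgf_eq hT (funext fun t => ?_)
  have hnum := integral_exp_linearCombination hXT a t
  have hden := integral_exp_linearCombination hXT a 0
  simp only [zero_mul, add_zero] at hden
  rw [mgf, integral_exp_tilted]
  simp only [Pi.add_apply]
  rw [hnum, hden, ← exp_sub, Real.coe_toNNReal _ (variance_nonneg _ _)]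
  ring_nf

lemma integral_exp_mul_ite_le (hXT : HasGaussianLaw (fun ω => (X ω, T ω)) μ)
    (hT : Var[T; μ] ≠ 0) (a u : ℝ) :
    ∫ ω, exp (a * X ω) * (if T ω ≤ u then (1 : ℝ) else 0) ∂μ
      = exp (a * μ[X] + a ^ 2 * Var[X; μ] / 2)
        * stdNormalCDF ((u - (μ[T] + a * cov[X, T; μ])) / √Var[T; μ]) := by
  have hT_tilted : AEMeasurable T (μ.tilted (a * X ·)) :=
    hXT.snd.aemeasurable.mono_ac (tilted_absolutelyContinuous _ _)
  have hv : Var[T; μ].toNNReal ≠ 0 := by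
    simpa using (variance_nonneg T μ).lt_of_ne' hT
  have hZ : ∫ ω, exp (a * X ω) ∂μ = exp (a * μ[X] + a ^ 2 * Var[X; μ] / 2) := by
    simpa using integral_exp_linearCombination hXT a 0
  calc ∫ ω, exp (a * X ω) * (if T ω ≤ u then (1 : ℝ) else 0) ∂μ
      = (∫ ω, exp (a * X ω) ∂μ)
          * ∫ ω, (Set.Iic u).indicator 1 (T ω) ∂(μ.tilted (a * X ·)) := by
        rw [integral_tilted, ← integral_const_mul]
        congr with ω
        rw [smul_eq_mul, ← mul_assoc, mul_div_cancel₀ _ (hZ ▸ exp_ne_zero _)]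
        simp only [Set.indicator_apply, Set.mem_Iic, Pi.one_apply]
    _ = (∫ ω, exp (a * X ω) ∂μ) * ((μ.tilted (a * X ·)).map T).real (Set.Iic u) := by
        rw [← integral_indicator_one measurableSet_Iic, integral_map hT_tilted]
        exact (measurable_one.indicator measurableSet_Iic).aestronglyMeasurable
    _ = _ := by
        rw [map_tilted_mul_eq_gaussianReal hXT, gaussianReal_real_Iic hv, hZ,
          Real.coe_toNNReal _ (variance_nonneg _ _)]

lemma condExp_exp_mul_ite_le {m : MeasurableSpace Ω} {U : Ω → ℝ}
    (hXT : HasGaussianLaw (fun ω => (X ω, T ω)) μ) (hT : Var[T; μ] ≠ 0) (a : ℝ)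
    (hm : m ≤ mΩ) (hU : Measurable[m] U)
    (hindep : Indep (MeasurableSpace.comap (fun ω => (X ω, T ω)) inferInstance) m μ) :
    μ[fun ω => exp (a * X ω) * (if T ω ≤ U ω then (1 : ℝ) else 0) | m]
      =ᵐ[μ] fun ω => exp (a * μ[X] + a ^ 2 * Var[X; μ] / 2)
        * stdNormalCDF ((U ω - (μ[T] + a * cov[X, T; μ])) / √Var[T; μ]) := by
  have := hXT.isProbabilityMeasure
  let f : ℝ × (ℝ × ℝ) → ℝ := fun p => exp (a * p.2.1) * (if p.2.2 ≤ p.1 then 1 else 0)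
  have hf : Measurable f :=
    Measurable.mul (by fun_prop) (Measurable.ite (measurableSet_le (by fun_prop) (by fun_prop))
      measurable_const measurable_const)
  have hf_int : Integrable (fun ω => f (U ω, (X ω, T ω))) μ := by
    refine (integrable_exp_mul_of_hasGaussianLaw hXT.fst a).mono' ?_ (ae_of_all _ fun ω => ?_)
    · exact (hf.comp_aemeasurable ((hU.mono hm le_rfl).aemeasurable.prodMk
        hXT.aemeasurable)).aestronglyMeasurable
    · dsimp only [f]
      split_ifs <;> simp [exp_nonneg]
  filter_upwards [condExp_ae_eq_integral_map_of_indep hm hU hXT.aemeasurable hindep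
    hf.stronglyMeasurable hf_int] with ω hω
  have hf_section : Measurable fun z => f (U ω, z) := hf.comp measurable_prodMk_left
  rw [hω, integral_map hXT.aemeasurable hf_section.aestronglyMeasurable]
  exact integral_exp_mul_ite_le hXT hT a (U ω)

end GaussianPair

section CenteredGaussianPair

variable {Ω : Type*} {mΩ : MeasurableSpace Ω} {μ : Measure Ω} {X T : Ω → ℝ} {vX vT q : ℝ}

lemma variance_and_covariance_eq_of_hasLaw_linearCombination (hvX : 0 ≤ vX) (hvT : 0 ≤ vT)
    (h : ∀ c d : ℝ, HasLaw (fun ω => c * X ω + d * T ω)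
      (gaussianReal 0 (c ^ 2 * vX + 2 * c * d * q + d ^ 2 * vT).toNNReal) μ) :
    Var[X; μ] = vX ∧ Var[T; μ] = vT ∧ cov[X, T; μ] = q := by
  have hXT := hasGaussianLaw_prodMk_of_linearCombination fun c d => (h c d).hasGaussianLaw
  have := hXT.isProbabilityMeasure
  -- The sign condition keeps `Real.toNNReal` from truncating the quadratic form.
  have hvar (c d : ℝ) (hcd : 0 ≤ c * d * q) :
      c ^ 2 * Var[X; μ] + 2 * c * d * cov[X, T; μ] + d ^ 2 * Var[T; μ]
        = c ^ 2 * vX + 2 * c * d * q + d ^ 2 * vT := by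
    rw [← variance_const_mul_add_const_mul hXT.fst.memLp_two hXT.snd.memLp_two,
      (h c d).variance_eq, variance_id_gaussianReal, Real.coe_toNNReal]
    nlinarith [mul_nonneg (sq_nonneg c) hvX, mul_nonneg (sq_nonneg d) hvT]
  have hX : Var[X; μ] = vX := by simpa using hvar 1 0 (by simp)
  have hT : Var[T; μ] = vT := by simpa using hvar 0 1 (by simp)
  refine ⟨hX, hT, ?_⟩
  rcases le_total 0 q with hq | hq
  · linarith [hvar 1 1 (by simpa using hq)]
  · linarith [hvar 1 (-1) (by simpa using hq)]

theorem stmt_16_general {F : MeasurableSpace Ω} {U : Ω → ℝ} (hvX : 0 ≤ vX) (hvT : 0 < vT)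
    (h : ∀ c d : ℝ, HasLaw (fun ω => c * X ω + d * T ω)
      (gaussianReal 0 (c ^ 2 * vX + 2 * c * d * q + d ^ 2 * vT).toNNReal) μ)
    (hF : F ≤ mΩ) (hU : Measurable[F] U)
    (hindep : Indep (MeasurableSpace.comap (fun ω => (X ω, T ω)) inferInstance) F μ) (a : ℝ) :
    μ[fun ω => exp (a * X ω) * (if T ω ≤ U ω then (1 : ℝ) else 0) | F]
      =ᵐ[μ] fun ω => exp (a ^ 2 * vX / 2) * stdNormalCDF (U ω / √vT - a * q / √vT) := by
  have hXT := hasGaussianLaw_prodMk_of_linearCombination fun c d => (h c d).hasGaussianLaw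
  obtain ⟨hX_var, hT_var, hcov⟩ :=
    variance_and_covariance_eq_of_hasLaw_linearCombination hvX hvT.le h
  have hX_mean : μ[X] = 0 := by
    simpa [integral_id_gaussianReal] using (h 1 0).integral_eq
  have hT_mean : μ[T] = 0 := by
    simpa [integral_id_gaussianReal] using (h 0 1).integral_eq
  simpa only [hX_mean, hT_mean, hX_var, hT_var, hcov, mul_zero, zero_add, sub_div] using
    condExp_exp_mul_ite_le hXT (hT_var ▸ hvT.ne') a hF hU hindep

end CenteredGaussianPair

lemma one_sub_exp_neg_mul_div_pos {κ Δ : ℝ} (hκ : κ ≠ 0) (hΔ : 0 < Δ) :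
    0 < (1 - exp (-κ * Δ)) / κ := by
  rcases hκ.lt_or_gt with hκ | hκ
  · refine div_pos_of_neg_of_neg (sub_neg.2 (one_lt_exp_iff.2 ?_)) hκ
    nlinarith
  · refine div_pos (sub_pos.2 (exp_lt_one_iff.2 ?_)) hκ
    nlinarith

/-- Suppose `ũ(T_t)` is `F_t`-measurable, and the Wiener integrals
`I_X = ∫_t^{t+Δ} e^{-κ_X(t+Δ-v)} dW_v`, `I_T = ∫_t^{t+Δ} e^{-κ_T(t+Δ-v)} dW_v`
are independent of `F_t`. Then
`E[e^{λσ_T I_X} 1_{I_T ≤ ũ} | F_t] = e^{λ²σ_T² kX²/2} Φ(ũ/k_T - λσ_T kXT²/k_T)`,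
where `kX² = (1-e^{-2κ_XΔ})/(2κ_X)`, `kT² = (1-e^{-2κ_TΔ})/(2κ_T)` (`k_T = √(kT²)`),
`kXT² = (1-e^{-(κ_X+κ_T)Δ})/(κ_X+κ_T)`.

The joint Gaussian law of `(I_X, I_T)` is encoded by the hypothesis `hGauss` (all linear
combinations are centered Gaussian with the covariance structure given by the Wiener
isometry), and independence of the pair from `F_t` is `hindep`. -/
theorem stmt_16 {Ω : Type*} [mΩ : MeasurableSpace Ω] (μ : Measure Ω) [IsProbabilityMeasure μ]
    (κX κT t Δ lam σT : ℝ) (hκX : 0 < κX) (hκT : 0 < κT) (hΔ : 0 < Δ) (ht : 0 ≤ t)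
    (IX IT : Ω → ℝ) (hIX : Measurable IX) (hIT : Measurable IT)
    (hGauss : ∀ c d : ℝ,
      Measure.map (fun ω => c * IX ω + d * IT ω) μ
        = gaussianReal 0 (Real.toNNReal
            (c ^ 2 * ((1 - Real.exp (-2 * κX * Δ)) / (2 * κX))
              + 2 * c * d * ((1 - Real.exp (-(κX + κT) * Δ)) / (κX + κT))
              + d ^ 2 * ((1 - Real.exp (-2 * κT * Δ)) / (2 * κT)))))
    (F : MeasurableSpace Ω) (hF : F ≤ mΩ)
    (U : Ω → ℝ) (hU : Measurable[F] U)
    (hindep : Indep (MeasurableSpace.comap (fun ω => (IX ω, IT ω)) inferInstance) F μ) :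
    (μ[fun ω => Real.exp (lam * σT * IX ω) * (if IT ω ≤ U ω then (1 : ℝ) else 0) | F])
      =ᵐ[μ] fun ω =>
        Real.exp (lam ^ 2 * σT ^ 2 * ((1 - Real.exp (-2 * κX * Δ)) / (2 * κX)) / 2)
          * stdNormalCDF
              (U ω / Real.sqrt ((1 - Real.exp (-2 * κT * Δ)) / (2 * κT))
                - lam * σT * ((1 - Real.exp (-(κX + κT) * Δ)) / (κX + κT))
                  / Real.sqrt ((1 - Real.exp (-2 * κT * Δ)) / (2 * κT))) := by
  have hvX := one_sub_exp_neg_mul_div_pos (κ := 2 * κX) (by positivity) hΔ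
  have hvT := one_sub_exp_neg_mul_div_pos (κ := 2 * κT) (by positivity) hΔ
  rw [← neg_mul] at hvX hvT
  simpa only [mul_pow] using stmt_16_general hvX.le hvT
    (fun c d => ⟨by fun_prop, hGauss c d⟩) hF hU hindep (lam * σT)
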